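/- arXiv:2102.02921 — 3 statements merged into one kernel-verified Lean document; each statement's English description precedes it below -/
import Mathlib

section
/- If μ > 0, then for all k ≥ 0 the STM iterates with μ_τ = μ/2 (τ = 2) satisfy A_k f(x_k) ≤ ψ_k(z_k) + δ₂ Σ_{j=0}^{k} A_j + δ₃ Σ_{j=0}^{k−1} A_j, where δ₂ = δ²/(2L_f) and δ₃ = δ²/μ. -/
open scoped RealInnerProductSpace

/-!
The noise is absorbed by Young's inequality `δ ‖d‖ ≤ c / 2 ‖d‖² + δ² / (2 c)`: with `c = L - K` it
turns the descent lemma of a `K`-smooth function into an upper quadratic model of curvature `L`, and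
with `c = μ` the strong convexity pays for the error of the linear lower model. From then on only
these two inequalities are used. The potential `A_k f(x_k) - ψ_k(z_k)` grows by at most
`δ₂ A_{k+1} + δ₃ A_k` per step: the linear terms of the model at `x̃_{k+1}` combine because
`A_{k+1} x_{k+1} = A_k x_k + α_{k+1} z_{k+1}`, and its quadratic term is exactly the growth of the
`(1 + m A_k)`-strongly convex `ψ_k` between its minimizer `z_k` and `z_{k+1}`, since
`A_{k+1} (x_{k+1} - x̃_{k+1}) = α_{k+1} (z_{k+1} - z_k)` and
`L α_{k+1}² = (1 + m A_k) A_{k+1}`.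
-/

theorem add_modulus_le_of_uniformConvexOn_of_isMinOn {E : Type*} [NormedAddCommGroup E]
    [NormedSpace ℝ E] {Q : Set E} {φ : ℝ → ℝ} {h : E → ℝ} (hh : UniformConvexOn Q φ h) {w y : E}
    (hw : w ∈ Q) (hmin : IsMinOn h Q w) (hy : y ∈ Q) :
    h w + φ ‖y - w‖ ≤ h y := by
  have hsegment : ∀ t ∈ Set.Ioo (0 : ℝ) 1, (1 - t) * φ ‖y - w‖ ≤ h y - h w := by
    rintro t ⟨ht0, ht1⟩
    have hconv := hh.2 hy hw ht0.le (sub_nonneg.2 ht1.le) (add_sub_cancel t 1)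
    have hle := isMinOn_iff.1 hmin _
      (hh.1 hy hw ht0.le (sub_nonneg.2 ht1.le) (add_sub_cancel t 1))
    simp only [smul_eq_mul] at hconv
    refine le_of_mul_le_mul_left ?_ ht0
    linarith
  have hlim : Filter.Tendsto (fun t : ℝ => (1 - t) * φ ‖y - w‖) (nhdsWithin 0 (Set.Ioi 0))
      (nhds (φ ‖y - w‖)) := by
    have hcont : Continuous fun t : ℝ => (1 - t) * φ ‖y - w‖ := by fun_prop
    simpa using (hcont.tendsto 0).mono_left nhdsWithin_le_nhds
  have hφ : φ ‖y - w‖ ≤ h y - h w :=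
    le_of_tendsto hlim (Filter.eventually_of_mem (Ioo_mem_nhdsGT zero_lt_one) hsegment)
  linarith

section InnerProductSpace

variable {E : Type*} [NormedAddCommGroup E] [InnerProductSpace ℝ E]

theorem inner_le_of_norm_le {e : E} {c δ : ℝ} (hc : 0 < c) (he : ‖e‖ ≤ δ) (d : E) :
    ⟪e, d⟫ ≤ c / 2 * ‖d‖ ^ 2 + δ ^ 2 / (2 * c) := by
  have hyoung : c / 2 * ‖d‖ ^ 2 + δ ^ 2 / (2 * c) - δ * ‖d‖ = (c * ‖d‖ - δ) ^ 2 / (2 * c) := by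
    field_simp
    ring
  have hsq : 0 ≤ (c * ‖d‖ - δ) ^ 2 / (2 * c) := by positivity
  calc ⟪e, d⟫ ≤ ‖e‖ * ‖d‖ := real_inner_le_norm e d
    _ ≤ δ * ‖d‖ := by gcongr
    _ ≤ c / 2 * ‖d‖ ^ 2 + δ ^ 2 / (2 * c) := by linarith

/-- The value at `y` of the linearization of `f` at `v`, with `g v` in the role of the gradient;
`g` is arbitrary so that both exact and inexact gradients are covered. -/
def linearModel (f : E → ℝ) (g : E → E) (v y : E) : ℝ :=
  f v + ⟪g v, y - v⟫

theorem mul_linearModel_of_smul_eq {f : E → ℝ} {g : E → E} {a b : ℝ} {u w y : E}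
    (hy : (a + b) • y = a • u + b • w) (v : E) :
    (a + b) * linearModel f g v y = a * linearModel f g v u + b * linearModel f g v w := by
  have hinner : (a + b) * ⟪g v, y⟫ = a * ⟪g v, u⟫ + b * ⟪g v, w⟫ := by
    simpa only [inner_add_right, real_inner_smul_right] using congrArg (fun p => ⟪g v, p⟫) hy
  simp only [linearModel, inner_sub_right]
  linear_combination hinner

theorem strongConvexOn_mul_linearModel_add {Q : Set E} (hQ : Convex ℝ Q) (f : E → ℝ) (g : E → E)
    (a m : ℝ) (v : E) :
    StrongConvexOn Q (a * m) fun y => a * (linearModel f g v y + m / 2 * ‖y - v‖ ^ 2) := by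
  rw [strongConvexOn_iff_convex]
  have haffine : (fun y => a * (linearModel f g v y + m / 2 * ‖y - v‖ ^ 2) - a * m / 2 * ‖y‖ ^ 2) =
      fun y => innerₗ E (a • (g v - m • v)) y + a * (f v - ⟪g v, v⟫ + m / 2 * ‖v‖ ^ 2) := by
    funext y
    simp only [linearModel, norm_sub_sq_real, inner_sub_right, innerₗ_apply_apply, inner_sub_left,
      real_inner_smul_left, real_inner_comm v y]
    ring
  rw [haffine]
  exact ((innerₗ E (a • (g v - m • v))).convexOn hQ).add_const _

theorem strongConvexOn_half_norm_sub_sq {Q : Set E} (hQ : Convex ℝ Q) (v : E) :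
    StrongConvexOn Q 1 fun y => 1 / 2 * ‖y - v‖ ^ 2 := by
  simpa [linearModel] using strongConvexOn_mul_linearModel_add hQ 0 0 1 1 v

theorem strongConvexOn_add {Q : Set E} {h₁ h₂ : E → ℝ} {m₁ m₂ : ℝ}
    (hh₁ : StrongConvexOn Q m₁ h₁) (hh₂ : StrongConvexOn Q m₂ h₂) :
    StrongConvexOn Q (m₁ + m₂) (h₁ + h₂) := by
  refine UniformConvexOn.mono (fun r => ?_) (UniformConvexOn.add hh₁ hh₂)
  simp only [Pi.add_apply, add_div, add_mul, le_refl]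

/-- `g` is an inexact first-order oracle for `f` on `Q`: its linear model exceeds `f` by at most
`δ₃` and, with a quadratic term of curvature `L` added, falls short of `f` by at most `δ₂`. -/
structure IsInexactOracle (Q : Set E) (f : E → ℝ) (g : E → E) (L δ₂ δ₃ : ℝ) : Prop where
  le_model : ∀ v ∈ Q, ∀ w ∈ Q, f w ≤ linearModel f g v w + L / 2 * ‖w - v‖ ^ 2 + δ₂
  model_le : ∀ v ∈ Q, ∀ w ∈ Q, linearModel f g v w ≤ f w + δ₃

section Gradient

variable [CompleteSpace E] {Q : Set E} {f : E → ℝ} {f' : E → E}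

theorem hasDerivWithinAt_comp_add_smul_sub {v w p : E} (hQ : Convex ℝ Q) (hv : v ∈ Q) (hw : w ∈ Q)
    {t : ℝ} (hf : HasGradientWithinAt f p Q (v + t • (w - v))) :
    HasDerivWithinAt (fun s : ℝ => f (v + s • (w - v))) ⟪p, w - v⟫ (Set.Icc 0 1) t := by
  have hline : HasDerivWithinAt (fun s : ℝ => v + s • (w - v)) (w - v) (Set.Icc 0 1) t := by
    simpa using (((hasDerivAt_id t).smul_const (w - v)).const_add v).hasDerivWithinAt
  exact hf.hasFDerivWithinAt.comp_hasDerivWithinAt t hline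
    fun s hs => hQ.add_smul_sub_mem hv hw hs

theorem le_linearModel_add_of_lipschitz_gradient (hQ : Convex ℝ Q)
    (hgrad : ∀ u ∈ Q, HasGradientWithinAt f (f' u) Q u) {K : ℝ} {v w : E}
    (hlip : ∀ u ∈ Q, ‖f' u - f' v‖ ≤ K * ‖u - v‖) (hv : v ∈ Q) (hw : w ∈ Q) :
    f w ≤ linearModel f f' v w + K / 2 * ‖w - v‖ ^ 2 := by
  have hmem : ∀ t ∈ Set.Icc (0 : ℝ) 1, v + t • (w - v) ∈ Q :=
    fun t ht => hQ.add_smul_sub_mem hv hw ht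
  let gap : ℝ → ℝ := fun t =>
    f (v + t • (w - v)) - t * ⟪f' v, w - v⟫ - K / 2 * ‖w - v‖ ^ 2 * t ^ 2
  have hderiv : ∀ t ∈ Set.Icc (0 : ℝ) 1, HasDerivWithinAt gap
      (⟪f' (v + t • (w - v)) - f' v, w - v⟫ - K * ‖w - v‖ ^ 2 * t) (Set.Icc 0 1) t := by
    intro t ht
    have hf := hasDerivWithinAt_comp_add_smul_sub hQ hv hw (hgrad _ (hmem t ht))
    refine ((hf.sub ((hasDerivAt_id t).mul_const ⟪f' v, w - v⟫).hasDerivWithinAt).sub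
      ((hasDerivAt_pow 2 t).const_mul (K / 2 * ‖w - v‖ ^ 2)).hasDerivWithinAt).congr_deriv ?_
    rw [inner_sub_left]
    ring
  have hnonpos : ∀ t ∈ Set.Icc (0 : ℝ) 1,
      ⟪f' (v + t • (w - v)) - f' v, w - v⟫ - K * ‖w - v‖ ^ 2 * t ≤ 0 := by
    intro t ht
    have hlip_t : ‖f' (v + t • (w - v)) - f' v‖ ≤ K * (t * ‖w - v‖) := by
      simpa [norm_smul, abs_of_nonneg ht.1] using hlip _ (hmem t ht)
    refine sub_nonpos.2 ?_
    calc ⟪f' (v + t • (w - v)) - f' v, w - v⟫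
        ≤ ‖f' (v + t • (w - v)) - f' v‖ * ‖w - v‖ := real_inner_le_norm _ _
      _ ≤ K * (t * ‖w - v‖) * ‖w - v‖ := by gcongr
      _ = K * ‖w - v‖ ^ 2 * t := by ring
  have hanti : AntitoneOn gap (Set.Icc 0 1) :=
    antitoneOn_of_hasDerivWithinAt_nonpos (convex_Icc 0 1)
      (fun t ht => (hderiv t ht).continuousWithinAt)
      (fun t ht => (hderiv t (interior_subset ht)).mono interior_subset)
      fun t ht => hnonpos t (interior_subset ht)
  have hgap : gap 1 ≤ gap 0 := hanti (by simp) (by simp) zero_le_one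
  simp only [gap, one_smul, zero_smul, add_sub_cancel, add_zero] at hgap
  simp only [linearModel]
  linarith

theorem isInexactOracle_of_norm_sub_gradient_le {g : E → E} {K L μ δ : ℝ} (hQ : Convex ℝ Q)
    (hKL : K < L) (hμ : 0 < μ) (hgrad : ∀ v ∈ Q, HasGradientWithinAt f (f' v) Q v)
    (hsmooth : ∀ v ∈ Q, ∀ w ∈ Q, ‖f' v - f' w‖ ≤ K * ‖v - w‖)
    (hsc : ∀ v ∈ Q, ∀ w ∈ Q, f v + ⟪f' v, w - v⟫ + μ / 2 * ‖v - w‖ ^ 2 ≤ f w)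
    (hnoise : ∀ v ∈ Q, ‖g v - f' v‖ ≤ δ) :
    IsInexactOracle Q f g L (δ ^ 2 / (2 * (L - K))) (δ ^ 2 / (2 * μ)) where
  le_model v hv w hw := by
    have hdescent := le_linearModel_add_of_lipschitz_gradient hQ hgrad
      (fun u hu => hsmooth u hu v hv) hv hw
    have herror := inner_le_of_norm_le (sub_pos.2 hKL)
      (norm_sub_rev (g v) (f' v) ▸ hnoise v hv) (w - v)
    rw [inner_sub_left] at herror
    simp only [linearModel] at hdescent ⊢
    linarith
  model_le v hv w hw := by
    have hlower := hsc v hv w hw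
    have herror := inner_le_of_norm_le hμ (hnoise v hv) (w - v)
    rw [inner_sub_left] at herror
    rw [norm_sub_rev] at hlower
    simp only [linearModel]
    linarith

end Gradient

/-- `α, A, xt, x, z, ψ` are the sequences `α_k, A_k, x̃_k, x_k, z_k, ψ_k` of the similar triangles
method on `Q` with oracle `(f, g)`, smoothness parameter `L` and strong convexity parameter `m`.
The argmin defining `z_k` is encoded as `z_k` being some minimizer of `ψ_k` on `Q`. -/
structure IsSTM (Q : Set E) (f : E → ℝ) (g : E → E) (L m : ℝ) (α A : ℕ → ℝ) (xt x z : ℕ → E)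
    (ψ : ℕ → E → ℝ) : Prop where
  xt_zero_mem : xt 0 ∈ Q
  α_zero : α 0 = 1 / L
  A_zero : A 0 = 1 / L
  ψ_zero : ∀ y, ψ 0 y = 1 / 2 * ‖y - xt 0‖ ^ 2 +
    α 0 * (linearModel f g (xt 0) y + m / 2 * ‖y - xt 0‖ ^ 2)
  z_mem : ∀ k, z k ∈ Q
  isMinOn_z : ∀ k, IsMinOn (ψ k) Q (z k)
  x_zero : x 0 = z 0
  α_succ_pos : ∀ k, 0 < α (k + 1)
  α_succ_eq : ∀ k, (1 + m * A k) * (A k + α (k + 1)) = L * α (k + 1) ^ 2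
  A_succ : ∀ k, A (k + 1) = A k + α (k + 1)
  xt_succ : ∀ k, xt (k + 1) = (A (k + 1))⁻¹ • (A k • x k + α (k + 1) • z k)
  ψ_succ : ∀ k y, ψ (k + 1) y = ψ k y +
    α (k + 1) * (linearModel f g (xt (k + 1)) y + m / 2 * ‖y - xt (k + 1)‖ ^ 2)
  x_succ : ∀ k, x (k + 1) = (A (k + 1))⁻¹ • (A k • x k + α (k + 1) • z (k + 1))

namespace IsSTM

variable {Q : Set E} {f : E → ℝ} {g : E → E} {L m δ₂ δ₃ : ℝ} {α A : ℕ → ℝ} {xt x z : ℕ → E}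
  {ψ : ℕ → E → ℝ}

theorem A_pos (stm : IsSTM Q f g L m α A xt x z ψ) (hL : 0 < L) (k : ℕ) : 0 < A k := by
  induction k with
  | zero => rw [stm.A_zero]; positivity
  | succ k ih => rw [stm.A_succ]; exact add_pos ih (stm.α_succ_pos k)

theorem inv_smul_add_smul_mem (stm : IsSTM Q f g L m α A xt x z ψ) (hL : 0 < L)
    (hQ : Convex ℝ Q) (k : ℕ) {v w : E} (hv : v ∈ Q) (hw : w ∈ Q) :
    (A (k + 1))⁻¹ • (A k • v + α (k + 1) • w) ∈ Q := by
  have hA := stm.A_pos hL k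
  have hα := stm.α_succ_pos k
  rw [stm.A_succ, smul_add, smul_smul, smul_smul, inv_mul_eq_div, inv_mul_eq_div]
  exact convex_iff_div.1 hQ hv hw hA.le hα.le (add_pos hA hα)

theorem x_mem (stm : IsSTM Q f g L m α A xt x z ψ) (hL : 0 < L) (hQ : Convex ℝ Q) (k : ℕ) :
    x k ∈ Q := by
  induction k with
  | zero => rw [stm.x_zero]; exact stm.z_mem 0
  | succ k ih => rw [stm.x_succ]; exact stm.inv_smul_add_smul_mem hL hQ k ih (stm.z_mem _)

theorem xt_succ_mem (stm : IsSTM Q f g L m α A xt x z ψ) (hL : 0 < L) (hQ : Convex ℝ Q) (k : ℕ) :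
    xt (k + 1) ∈ Q := by
  rw [stm.xt_succ]
  exact stm.inv_smul_add_smul_mem hL hQ k (stm.x_mem hL hQ k) (stm.z_mem k)

theorem strongConvexOn_ψ (stm : IsSTM Q f g L m α A xt x z ψ) (hQ : Convex ℝ Q) (k : ℕ) :
    StrongConvexOn Q (1 + m * A k) (ψ k) := by
  induction k with
  | zero =>
    rw [funext stm.ψ_zero, stm.A_zero, ← stm.α_zero, mul_comm m]
    exact strongConvexOn_add (strongConvexOn_half_norm_sub_sq hQ _)
      (strongConvexOn_mul_linearModel_add hQ f g (α 0) m (xt 0))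
  | succ k ih =>
    rw [funext (stm.ψ_succ k), stm.A_succ, mul_add, ← add_assoc, mul_comm m (α (k + 1))]
    exact strongConvexOn_add ih
      (strongConvexOn_mul_linearModel_add hQ f g (α (k + 1)) m (xt (k + 1)))

theorem ψ_add_norm_sq_le (stm : IsSTM Q f g L m α A xt x z ψ) (hQ : Convex ℝ Q) (k : ℕ) {y : E}
    (hy : y ∈ Q) :
    ψ k (z k) + (1 + m * A k) / 2 * ‖y - z k‖ ^ 2 ≤ ψ k y :=
  add_modulus_le_of_uniformConvexOn_of_isMinOn (stm.strongConvexOn_ψ hQ k) (stm.z_mem k)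
    (stm.isMinOn_z k) hy

theorem A_smul_x_succ (stm : IsSTM Q f g L m α A xt x z ψ) (hL : 0 < L) (k : ℕ) :
    A (k + 1) • x (k + 1) = A k • x k + α (k + 1) • z (k + 1) := by
  rw [stm.x_succ, smul_inv_smul₀ (stm.A_pos hL (k + 1)).ne']

theorem A_smul_x_sub_xt (stm : IsSTM Q f g L m α A xt x z ψ) (hL : 0 < L) (k : ℕ) :
    A (k + 1) • (x (k + 1) - xt (k + 1)) = α (k + 1) • (z (k + 1) - z k) := by
  rw [smul_sub, stm.A_smul_x_succ hL, stm.xt_succ, smul_inv_smul₀ (stm.A_pos hL (k + 1)).ne',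
    add_sub_add_left_eq_sub, smul_sub]

theorem A_mul_norm_x_sub_xt_sq (stm : IsSTM Q f g L m α A xt x z ψ) (hL : 0 < L) (k : ℕ) :
    A (k + 1) * (L / 2 * ‖x (k + 1) - xt (k + 1)‖ ^ 2) =
      (1 + m * A k) / 2 * ‖z (k + 1) - z k‖ ^ 2 := by
  have hA := stm.A_pos hL (k + 1)
  have hnorm : A (k + 1) * ‖x (k + 1) - xt (k + 1)‖ = α (k + 1) * ‖z (k + 1) - z k‖ := by
    rw [← norm_smul_of_nonneg hA.le, ← norm_smul_of_nonneg (stm.α_succ_pos k).le,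
      stm.A_smul_x_sub_xt hL]
  have hnorm_sq := congrArg (· ^ 2) hnorm
  simp only [mul_pow] at hnorm_sq
  have hα := stm.α_succ_eq k
  rw [← stm.A_succ] at hα
  refine mul_left_cancel₀ hA.ne' ?_
  linear_combination L / 2 * hnorm_sq - ‖z (k + 1) - z k‖ ^ 2 / 2 * hα

theorem A_mul_linearModel_x_succ (stm : IsSTM Q f g L m α A xt x z ψ) (hL : 0 < L) (k : ℕ)
    (v : E) :
    A (k + 1) * linearModel f g v (x (k + 1)) =
      A k * linearModel f g v (x k) + α (k + 1) * linearModel f g v (z (k + 1)) := by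
  rw [stm.A_succ]
  exact mul_linearModel_of_smul_eq (stm.A_succ k ▸ stm.A_smul_x_succ hL k) v

theorem A_mul_f_x_zero_le (stm : IsSTM Q f g L m α A xt x z ψ) (hL : 0 < L) (hm : 0 ≤ m)
    (horacle : IsInexactOracle Q f g L δ₂ δ₃) :
    A 0 * f (x 0) ≤ ψ 0 (z 0) + δ₂ * A 0 := by
  have hA := stm.A_pos hL 0
  have hAL : A 0 * L = 1 := by rw [stm.A_zero, one_div_mul_cancel hL.ne']
  have hupper := mul_le_mul_of_nonneg_left
    (horacle.le_model _ stm.xt_zero_mem _ (stm.z_mem 0)) hA.le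
  have hquad : 0 ≤ A 0 * (m / 2 * ‖z 0 - xt 0‖ ^ 2) := by positivity
  rw [stm.x_zero, stm.ψ_zero, stm.α_zero, ← stm.A_zero]
  linear_combination hupper + hquad + ‖z 0 - xt 0‖ ^ 2 / 2 * hAL

theorem A_mul_f_x_succ_le (stm : IsSTM Q f g L m α A xt x z ψ) (hL : 0 < L) (hm : 0 ≤ m)
    (hQ : Convex ℝ Q) (horacle : IsInexactOracle Q f g L δ₂ δ₃) (k : ℕ) :
    A (k + 1) * f (x (k + 1)) ≤ A k * f (x k) + (ψ (k + 1) (z (k + 1)) - ψ k (z k)) +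
      δ₂ * A (k + 1) + δ₃ * A k := by
  have hxt := stm.xt_succ_mem hL hQ k
  have hupper := mul_le_mul_of_nonneg_left
    (horacle.le_model _ hxt _ (stm.x_mem hL hQ (k + 1))) (stm.A_pos hL (k + 1)).le
  have hlower := mul_le_mul_of_nonneg_left
    (horacle.model_le _ hxt _ (stm.x_mem hL hQ k)) (stm.A_pos hL k).le
  have hlinear := stm.A_mul_linearModel_x_succ hL k (xt (k + 1))
  have htriangles := stm.A_mul_norm_x_sub_xt_sq hL k
  have hgrowth := stm.ψ_add_norm_sq_le hQ k (stm.z_mem (k + 1))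
  have hquad : 0 ≤ α (k + 1) * (m / 2 * ‖z (k + 1) - xt (k + 1)‖ ^ 2) := by
    have := stm.α_succ_pos k
    positivity
  rw [stm.ψ_succ]
  linear_combination hupper + hlower + hlinear + htriangles + hgrowth + hquad

theorem A_mul_f_x_le (stm : IsSTM Q f g L m α A xt x z ψ) (hL : 0 < L) (hm : 0 ≤ m)
    (hQ : Convex ℝ Q) (horacle : IsInexactOracle Q f g L δ₂ δ₃) (k : ℕ) :
    A k * f (x k) ≤ ψ k (z k) + δ₂ * ∑ j ∈ Finset.range (k + 1), A j +
      δ₃ * ∑ j ∈ Finset.range k, A j := by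
  induction k with
  | zero => simpa using stm.A_mul_f_x_zero_le hL hm horacle
  | succ k ih =>
    have hstep := stm.A_mul_f_x_succ_le hL hm hQ horacle k
    rw [Finset.sum_range_succ _ (k + 1), Finset.sum_range_succ _ k]
    rw [Finset.sum_range_succ _ k] at ih
    linarith

end IsSTM

theorem stmt_9_general [CompleteSpace E] {Q : Set E} {f : E → ℝ} {f' g : E → E}
    {K L m μ δ : ℝ} {α A : ℕ → ℝ} {xt x z : ℕ → E} {ψ : ℕ → E → ℝ} (hQ : Convex ℝ Q)
    (hL : 0 < L) (hKL : K < L) (hm : 0 ≤ m) (hμ : 0 < μ)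
    (hgrad : ∀ v ∈ Q, HasGradientWithinAt f (f' v) Q v)
    (hsmooth : ∀ v ∈ Q, ∀ w ∈ Q, ‖f' v - f' w‖ ≤ K * ‖v - w‖)
    (hsc : ∀ v ∈ Q, ∀ w ∈ Q, f v + ⟪f' v, w - v⟫ + μ / 2 * ‖v - w‖ ^ 2 ≤ f w)
    (hnoise : ∀ v ∈ Q, ‖g v - f' v‖ ≤ δ) (stm : IsSTM Q f g L m α A xt x z ψ) (k : ℕ) :
    A k * f (x k) ≤ ψ k (z k) +
      δ ^ 2 / (2 * (L - K)) * ∑ j ∈ Finset.range (k + 1), A j +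
      δ ^ 2 / (2 * μ) * ∑ j ∈ Finset.range k, A j :=
  stm.A_mul_f_x_le hL hm hQ
    (isInexactOracle_of_norm_sub_gradient_le hQ hKL hμ hgrad hsmooth hsc hnoise) k

end InnerProductSpace

/-- Proposition 4.5: per-iterate estimate of STM (`τ = 2`, `μ_τ = μ/2`) under
absolute noise, with `L = 2 L_f`, `δ₂ = δ²/(2 L_f)`, `δ₃ = δ²/μ`. -/
theorem stmt_9 {n : ℕ} (Q : Set (EuclideanSpace ℝ (Fin n)))
    (hQclosed : IsClosed Q) (hQconvex : Convex ℝ Q)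
    (f : EuclideanSpace ℝ (Fin n) → ℝ)
    (f' gt : EuclideanSpace ℝ (Fin n) → EuclideanSpace ℝ (Fin n))
    (Lf μ δ : ℝ) (hLf : 0 < Lf) (hμ : 0 < μ) (hδ : 0 ≤ δ)
    (hgrad : ∀ v ∈ Q, HasGradientAt f (f' v) v)
    (hsmooth : ∀ v ∈ Q, ∀ w ∈ Q, ‖f' v - f' w‖ ≤ Lf * ‖v - w‖)
    (hsc : ∀ v ∈ Q, ∀ w ∈ Q,
      f v + ⟪f' v, w - v⟫ + μ / 2 * ‖v - w‖ ^ 2 ≤ f w)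
    (horacle : ∀ v ∈ Q, ‖gt v - f' v‖ ≤ δ)
    (α A : ℕ → ℝ) (xt x z : ℕ → EuclideanSpace ℝ (Fin n))
    (ψ : ℕ → EuclideanSpace ℝ (Fin n) → ℝ)
    (hxt0 : xt 0 ∈ Q) (hα0 : α 0 = 1 / (2 * Lf)) (hA0 : A 0 = 1 / (2 * Lf))
    (hψ0 : ∀ y, ψ 0 y = 1 / 2 * ‖y - xt 0‖ ^ 2 +
      α 0 * (f (xt 0) + ⟪gt (xt 0), y - xt 0⟫ + μ / 2 / 2 * ‖y - xt 0‖ ^ 2))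
    (hzmem : ∀ k, z k ∈ Q) (hzmin : ∀ k, ∀ y ∈ Q, ψ k (z k) ≤ ψ k y)
    (hx0 : x 0 = z 0)
    (hαpos : ∀ k, 0 < α (k + 1))
    (hαeq : ∀ k, (1 + μ / 2 * A k) * (A k + α (k + 1)) = 2 * Lf * α (k + 1) ^ 2)
    (hA : ∀ k, A (k + 1) = A k + α (k + 1))
    (hxt : ∀ k, xt (k + 1) = (A (k + 1))⁻¹ • (A k • x k + α (k + 1) • z k))
    (hψ : ∀ k y, ψ (k + 1) y = ψ k y + α (k + 1) *
      (f (xt (k + 1)) + ⟪gt (xt (k + 1)), y - xt (k + 1)⟫ +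
        μ / 2 / 2 * ‖y - xt (k + 1)‖ ^ 2))
    (hx : ∀ k, x (k + 1) = (A (k + 1))⁻¹ • (A k • x k + α (k + 1) • z (k + 1))) :
    ∀ k : ℕ, A k * f (x k) ≤ ψ k (z k) +
      δ ^ 2 / (2 * Lf) * ∑ j ∈ Finset.range (k + 1), A j +
      δ ^ 2 / μ * ∑ j ∈ Finset.range k, A j := by
  intro k
  have hL : 0 < 2 * Lf := by positivity
  have stm : IsSTM Q f gt (2 * Lf) (μ / 2) α A xt x z ψ :=
    ⟨hxt0, hα0, hA0, hψ0, hzmem, hzmin, hx0, hαpos, hαeq, hA, hxt, hψ, hx⟩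
  have hgeneral := stmt_9_general hQconvex hL (by linarith) (by positivity) hμ
    (fun v hv => (hgrad v hv).hasFDerivAt.hasFDerivWithinAt) hsmooth hsc horacle stm k
  have hsum : 0 ≤ ∑ j ∈ Finset.range k, A j := Finset.sum_nonneg fun j _ => (stm.A_pos hL j).le
  have hδ₃ : δ ^ 2 / (2 * μ) ≤ δ ^ 2 / μ := by gcongr; linarith
  rw [show 2 * Lf - Lf = Lf by ring] at hgeneral
  exact hgeneral.trans (by gcongr)
end

section
/- If the oracle error satisfies δ = 0 (i.e. g̃ = ∇f on Q) and ‖x̃₀ − x*‖₂ ≤ R, then the STM iterates remain in the ball of radius R around x*: for all k ≥ 0, ‖z_k − x*‖₂ ≤ R, ‖x_k − x*‖₂ ≤ R, and ‖x̃_k − x*‖₂ ≤ R, i.e. R̃_k ≤ R. -/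
open scoped RealInnerProductSpace

/-! By the choice of `α_k`, the minimum of the estimating function `ψ_k` over `Q` is at least
`A_k f(x_k)`, while the lower model of `f` gives `ψ_k(y) ≤ ½‖y - x̃₀‖² + A_k f(y)` on `Q`. As `ψ_k`
is `(1 + m A_k)`-strongly convex with minimizer `z_k`, it exceeds its minimum by at least
`½(1 + m A_k)‖y - z_k‖²` at `y`. At `y = x*` these estimates combine to
`A_k (f(x_k) - f(x*)) + ½(1 + m A_k)‖x* - z_k‖² ≤ ½‖x* - x̃₀‖²`, and the gap `f(x_k) - f(x*)` is
nonnegative. Hence every `z_k` lies in the ball, and `x_k`, `x̃_k` are convex combinations of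
`x̃₀` and the `z_j`. -/

section UniformConvexity

open Filter Topology

variable {E : Type*} [NormedAddCommGroup E] [NormedSpace ℝ E] {s : Set E} {p q : E → ℝ}

theorem add_modulus_le_of_isMinOn {φ : ℝ → ℝ} {u v : E} (hp : UniformConvexOn s φ p)
    (hmin : IsMinOn p s u) (hu : u ∈ s) (hv : v ∈ s) : p u + φ ‖v - u‖ ≤ p v := by
  have hsegment : ∀ t ∈ Set.Ioc (0 : ℝ) 1, p u + (1 - t) * φ ‖v - u‖ ≤ p v := by
    rintro t ⟨ht0, ht1⟩
    have ht : 0 ≤ 1 - t := sub_nonneg.2 ht1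
    have hle := (isMinOn_iff.1 hmin _
      (hp.1 hv hu ht0.le ht (add_sub_cancel t 1))).trans
      (hp.2 hv hu ht0.le ht (add_sub_cancel t 1))
    simp only [smul_eq_mul] at hle
    refine le_of_mul_le_mul_left ?_ ht0
    linarith
  have hlim : Tendsto (fun t : ℝ => p u + (1 - t) * φ ‖v - u‖) (𝓝[>] 0)
      (𝓝 (p u + φ ‖v - u‖)) := by
    have hcont : Continuous fun t : ℝ => p u + (1 - t) * φ ‖v - u‖ := by fun_prop
    simpa using (hcont.tendsto 0).mono_left nhdsWithin_le_nhds
  exact le_of_tendsto hlim (eventually_of_mem (Ioc_mem_nhdsGT zero_lt_one) hsegment)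

theorem strongConvexOn_add_const_mul {m m' a : ℝ} (ha : 0 ≤ a) (hp : StrongConvexOn s m p)
    (hq : StrongConvexOn s m' q) : StrongConvexOn s (m + m' * a) fun y => p y + a * q y := by
  refine ⟨hp.1, fun y hy w hw b c hb hc hbc => ?_⟩
  have hp' := hp.2 hy hw hb hc hbc
  have hq' := mul_le_mul_of_nonneg_left (hq.2 hy hw hb hc hbc) ha
  simp only [smul_eq_mul] at hp' hq' ⊢
  linarith

theorem inv_smul_add_mem_of_convex (hs : Convex ℝ s) {a b : ℝ} (ha : 0 ≤ a) (hb : 0 ≤ b)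
    (hab : 0 < a + b) {u v : E} (hu : u ∈ s) (hv : v ∈ s) :
    (a + b)⁻¹ • (a • u + b • v) ∈ s := by
  simpa only [smul_add, smul_smul, div_eq_inv_mul] using convex_iff_div.1 hs hu hv ha hb hab

end UniformConvexity

section InnerProductSpace

variable {E : Type*} [NormedAddCommGroup E] [InnerProductSpace ℝ E]

section QuadraticModel

/-- The quadratic model of `f` at `v` with slope `g v` and curvature `m`; `m = 0` gives the
linearization. -/
noncomputable def quadraticModel (f : E → ℝ) (g : E → E) (m : ℝ) (v y : E) : ℝ :=
  f v + ⟪g v, y - v⟫ + m / 2 * ‖y - v‖ ^ 2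

/-- An exact first-order `(m, L)`-oracle for `f` on `Q`: the quadratic models of `f` with slope `g`
bound `f` from below with curvature `m` and from above with curvature `L`. The slope `g` is a
gradient in the main application, but may be any map for which these bounds hold. -/
structure IsFirstOrderOracle (f : E → ℝ) (g : E → E) (Q : Set E) (m L : ℝ) : Prop where
  lower : ∀ v ∈ Q, ∀ w ∈ Q, quadraticModel f g m v w ≤ f w
  upper : ∀ v ∈ Q, ∀ w ∈ Q, f w ≤ quadraticModel f g L v w

variable {f : E → ℝ} {g : E → E} {Q : Set E} {m m' L : ℝ}

theorem quadraticModel_eq_add_curvature (f : E → ℝ) (g : E → E) (m : ℝ) (v y : E) :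
    quadraticModel f g m v y = quadraticModel f g 0 v y + m / 2 * ‖y - v‖ ^ 2 := by
  simp only [quadraticModel, zero_div, zero_mul, add_zero]

theorem quadraticModel_mono (hm : m ≤ m') (v y : E) :
    quadraticModel f g m v y ≤ quadraticModel f g m' v y := by
  unfold quadraticModel
  gcongr

theorem strongConvexOn_quadraticModel {s : Set E} (hs : Convex ℝ s) (f : E → ℝ) (g : E → E)
    (m : ℝ) (v : E) : StrongConvexOn s m (quadraticModel f g m v) := by
  refine ⟨hs, fun y _ w _ a b _ _ hab => le_of_eq ?_⟩
  obtain rfl : b = 1 - a := eq_sub_of_add_eq' hab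
  have hcomb : a • y + (1 - a) • w - v = a • (y - v) + (1 - a) • (w - v) := by module
  have hdiff : y - w = (y - v) - (w - v) := (sub_sub_sub_cancel_right y w v).symm
  simp only [quadraticModel, hcomb, hdiff, norm_add_sq_real, norm_sub_sq_real (y - v),
    inner_add_right, real_inner_smul_left, real_inner_smul_right, norm_smul, mul_pow,
    Real.norm_eq_abs, sq_abs, smul_eq_mul]
  ring

theorem mul_quadraticModel_zero_of_smul_eq {a b : ℝ} {u w y : E}
    (hy : (a + b) • y = a • u + b • w) (v : E) :
    (a + b) * quadraticModel f g 0 v y =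
      a * quadraticModel f g 0 v u + b * quadraticModel f g 0 v w := by
  have hinner : (a + b) * ⟪g v, y - v⟫ = a * ⟪g v, u - v⟫ + b * ⟪g v, w - v⟫ := by
    simp only [← real_inner_smul_right, ← inner_add_right]
    congr 1
    rw [smul_sub, hy]
    module
  simp only [quadraticModel]
  linear_combination hinner

-- The triangles `x, z, z'` and `x, xt, x'` are similar, with ratio `a / (A + a)`.
theorem mul_quadraticModel_similar_triangles {A a M : ℝ} {x xt x' z z' : E} (hpos : A + a ≠ 0)
    (hM : M * (A + a) = L * a ^ 2) (hxt : xt = (A + a)⁻¹ • (A • x + a • z))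
    (hx' : x' = (A + a)⁻¹ • (A • x + a • z')) :
    (A + a) * quadraticModel f g L xt x' =
      A * quadraticModel f g 0 xt x + a * quadraticModel f g 0 xt z' +
        M / 2 * ‖z' - z‖ ^ 2 := by
  have hdiff : (A + a) • (x' - xt) = a • (z' - z) := by
    rw [hx', hxt, smul_sub, smul_inv_smul₀ hpos, smul_inv_smul₀ hpos]
    module
  have hnorm : (A + a) ^ 2 * ‖x' - xt‖ ^ 2 = a ^ 2 * ‖z' - z‖ ^ 2 := by
    simpa only [norm_smul, mul_pow, Real.norm_eq_abs, sq_abs] using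
      congrArg (fun u : E => ‖u‖ ^ (2 : ℕ)) hdiff
  have hcurv : (A + a) * (L / 2 * ‖x' - xt‖ ^ 2) = M / 2 * ‖z' - z‖ ^ 2 := by
    refine mul_left_cancel₀ hpos ?_
    linear_combination L / 2 * hnorm - ‖z' - z‖ ^ 2 / 2 * hM
  have hlin : (A + a) • x' = A • x + a • z' := by rw [hx', smul_inv_smul₀ hpos]
  rw [quadraticModel_eq_add_curvature f g L, mul_add, hcurv,
    mul_quadraticModel_zero_of_smul_eq hlin]

theorem le_quadraticModel_of_lipschitz {K : ℝ} {v w : E} (hconv : quadraticModel f g 0 w v ≤ f v)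
    (hlip : ‖g w - g v‖ ≤ K * ‖w - v‖) : f w ≤ quadraticModel f g (2 * K) v w := by
  have hinner : ⟪g w - g v, w - v⟫ ≤ K * ‖w - v‖ * ‖w - v‖ :=
    (real_inner_le_norm _ _).trans (mul_le_mul_of_nonneg_right hlip (norm_nonneg _))
  have hneg : ⟪g w, v - w⟫ = -⟪g w, w - v⟫ := by rw [← neg_sub, inner_neg_right]
  rw [inner_sub_left] at hinner
  simp only [quadraticModel] at hconv ⊢
  linarith

theorem isFirstOrderOracle_of_lipschitz {K : ℝ} (hm : 0 ≤ m)
    (hlower : ∀ v ∈ Q, ∀ w ∈ Q, quadraticModel f g m v w ≤ f w)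
    (hlip : ∀ v ∈ Q, ∀ w ∈ Q, ‖g v - g w‖ ≤ K * ‖v - w‖) :
    IsFirstOrderOracle f g Q m (2 * K) where
  lower := hlower
  upper v hv w hw := le_quadraticModel_of_lipschitz
    ((quadraticModel_mono hm w v).trans (hlower w hw v hv)) (hlip w hw v hv)

theorem IsFirstOrderOracle.of_curvature_le (horacle : IsFirstOrderOracle f g Q m' L)
    (hm : m ≤ m') : IsFirstOrderOracle f g Q m L where
  lower v hv w hw := (quadraticModel_mono hm v w).trans (horacle.lower v hv w hw)
  upper := horacle.upper

theorem IsFirstOrderOracle.linearization_le (horacle : IsFirstOrderOracle f g Q m L) (hm : 0 ≤ m)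
    {v w : E} (hv : v ∈ Q) (hw : w ∈ Q) : quadraticModel f g 0 v w ≤ f w :=
  (horacle.of_curvature_le hm).lower v hv w hw

end QuadraticModel

section SimilarTriangles

/-- A run of the similar triangles method (STM) on `Q` with oracle `(f, g)`, smoothness parameter
`L` and strong convexity parameter `m` (the paper's `μ_τ`). The sequence `xt` is `x̃`, and the
estimating functions `ψ` enter as a further sequence, of which `z` are minimizers over `Q`. -/
structure IsSTMRun (f : E → ℝ) (g : E → E) (Q : Set E) (L m : ℝ) (α A : ℕ → ℝ)
    (xt x z : ℕ → E) (ψ : ℕ → E → ℝ) : Prop where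
  start_mem : xt 0 ∈ Q
  α_zero : α 0 = 1 / L
  A_zero : A 0 = 1 / L
  ψ_zero : ∀ y, ψ 0 y = 1 / 2 * ‖y - xt 0‖ ^ 2 + α 0 * quadraticModel f g m (xt 0) y
  z_mem : ∀ k, z k ∈ Q
  isMinOn_z : ∀ k, IsMinOn (ψ k) Q (z k)
  x_zero : x 0 = z 0
  α_succ_pos : ∀ k, 0 < α (k + 1)
  α_succ_eq : ∀ k, (1 + m * A k) * (A k + α (k + 1)) = L * α (k + 1) ^ 2
  A_succ : ∀ k, A (k + 1) = A k + α (k + 1)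
  xt_succ : ∀ k, xt (k + 1) = (A (k + 1))⁻¹ • (A k • x k + α (k + 1) • z k)
  ψ_succ : ∀ k y, ψ (k + 1) y = ψ k y + α (k + 1) * quadraticModel f g m (xt (k + 1)) y
  x_succ : ∀ k, x (k + 1) = (A (k + 1))⁻¹ • (A k • x k + α (k + 1) • z (k + 1))

namespace IsSTMRun

variable {f : E → ℝ} {g : E → E} {Q : Set E} {L m : ℝ} {α A : ℕ → ℝ} {xt x z : ℕ → E}
  {ψ : ℕ → E → ℝ}

theorem A_pos (h : IsSTMRun f g Q L m α A xt x z ψ) (hL : 0 < L) (k : ℕ) : 0 < A k := by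
  induction k with
  | zero => rw [h.A_zero]; positivity
  | succ k ih => rw [h.A_succ]; exact add_pos ih (h.α_succ_pos k)

theorem α_zero_pos (h : IsSTMRun f g Q L m α A xt x z ψ) (hL : 0 < L) : 0 < α 0 := by
  rw [h.α_zero]
  positivity

theorem A_zero_eq_α_zero (h : IsSTMRun f g Q L m α A xt x z ψ) : A 0 = α 0 :=
  h.A_zero.trans h.α_zero.symm

theorem x_mem_and_xt_mem_of_convex (h : IsSTMRun f g Q L m α A xt x z ψ) (hL : 0 < L)
    {s : Set E} (hs : Convex ℝ s) (hstart : xt 0 ∈ s) (hz : ∀ k, z k ∈ s) (k : ℕ) :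
    x k ∈ s ∧ xt k ∈ s := by
  induction k with
  | zero => exact ⟨h.x_zero ▸ hz 0, hstart⟩
  | succ k ih =>
    have hmem (j : ℕ) : (A k + α (k + 1))⁻¹ • (A k • x k + α (k + 1) • z j) ∈ s :=
      inv_smul_add_mem_of_convex hs (h.A_pos hL k).le (h.α_succ_pos k).le
        (add_pos (h.A_pos hL k) (h.α_succ_pos k)) ih.1 (hz j)
    rw [h.x_succ, h.xt_succ, h.A_succ]
    exact ⟨hmem (k + 1), hmem k⟩

theorem x_mem (h : IsSTMRun f g Q L m α A xt x z ψ) (hL : 0 < L) (hQ : Convex ℝ Q) (k : ℕ) :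
    x k ∈ Q :=
  (h.x_mem_and_xt_mem_of_convex hL hQ h.start_mem h.z_mem k).1

theorem xt_mem (h : IsSTMRun f g Q L m α A xt x z ψ) (hL : 0 < L) (hQ : Convex ℝ Q) (k : ℕ) :
    xt k ∈ Q :=
  (h.x_mem_and_xt_mem_of_convex hL hQ h.start_mem h.z_mem k).2

theorem strongConvexOn_ψ (h : IsSTMRun f g Q L m α A xt x z ψ) (hL : 0 < L) (hQ : Convex ℝ Q)
    (k : ℕ) : StrongConvexOn Q (1 + m * A k) (ψ k) := by
  induction k with
  | zero =>
    have hprox : StrongConvexOn Q 1 fun y => 1 / 2 * ‖y - xt 0‖ ^ 2 := by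
      convert! strongConvexOn_quadraticModel hQ 0 0 1 (xt 0) using 2 with y
      simp [quadraticModel]
    rw [h.A_zero_eq_α_zero, funext h.ψ_zero]
    exact strongConvexOn_add_const_mul (h.α_zero_pos hL).le hprox
      (strongConvexOn_quadraticModel hQ f g m (xt 0))
  | succ k ih =>
    rw [h.A_succ, mul_add, ← add_assoc, funext (h.ψ_succ k)]
    exact strongConvexOn_add_const_mul (h.α_succ_pos k).le ih
      (strongConvexOn_quadraticModel hQ f g m (xt (k + 1)))

theorem ψ_z_add_le_ψ (h : IsSTMRun f g Q L m α A xt x z ψ) (hL : 0 < L) (hQ : Convex ℝ Q)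
    (k : ℕ) {y : E} (hy : y ∈ Q) :
    ψ k (z k) + (1 + m * A k) / 2 * ‖y - z k‖ ^ 2 ≤ ψ k y :=
  add_modulus_le_of_isMinOn (h.strongConvexOn_ψ hL hQ k) (h.isMinOn_z k) (h.z_mem k) hy

theorem ψ_le (h : IsSTMRun f g Q L m α A xt x z ψ) (hL : 0 < L) (hQ : Convex ℝ Q)
    (horacle : IsFirstOrderOracle f g Q m L) (k : ℕ) {y : E} (hy : y ∈ Q) :
    ψ k y ≤ 1 / 2 * ‖y - xt 0‖ ^ 2 + A k * f y := by
  have hmodel (j : ℕ) : quadraticModel f g m (xt j) y ≤ f y :=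
    horacle.lower _ (h.xt_mem hL hQ j) y hy
  induction k with
  | zero =>
    rw [h.ψ_zero, h.A_zero_eq_α_zero]
    gcongr
    exacts [(h.α_zero_pos hL).le, hmodel 0]
  | succ k ih =>
    rw [h.ψ_succ, h.A_succ, add_mul, ← add_assoc]
    gcongr
    exacts [(h.α_succ_pos k).le, hmodel (k + 1)]

theorem A_zero_mul_f_x_zero_le (h : IsSTMRun f g Q L m α A xt x z ψ) (hL : 0 < L) (hm : 0 ≤ m)
    (horacle : IsFirstOrderOracle f g Q m L) : A 0 * f (x 0) ≤ ψ 0 (z 0) := by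
  have hα := (h.α_zero_pos hL).le
  have hαL : α 0 * L = 1 := by rw [h.α_zero, one_div_mul_cancel hL.ne']
  rw [h.A_zero_eq_α_zero, h.x_zero, h.ψ_zero]
  calc α 0 * f (z 0)
      ≤ α 0 * quadraticModel f g L (xt 0) (z 0) := by
        gcongr
        exact horacle.upper _ h.start_mem _ (h.z_mem 0)
    _ = 1 / 2 * ‖z 0 - xt 0‖ ^ 2 + α 0 * quadraticModel f g 0 (xt 0) (z 0) := by
        rw [quadraticModel_eq_add_curvature f g L]
        linear_combination ‖z 0 - xt 0‖ ^ 2 / 2 * hαL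
    _ ≤ 1 / 2 * ‖z 0 - xt 0‖ ^ 2 + α 0 * quadraticModel f g m (xt 0) (z 0) := by
        gcongr
        exact quadraticModel_mono hm _ _

theorem A_mul_f_x_le (h : IsSTMRun f g Q L m α A xt x z ψ) (hL : 0 < L) (hm : 0 ≤ m)
    (hQ : Convex ℝ Q) (horacle : IsFirstOrderOracle f g Q m L) (k : ℕ) :
    A k * f (x k) ≤ ψ k (z k) := by
  induction k with
  | zero => exact h.A_zero_mul_f_x_zero_le hL hm horacle
  | succ k ih =>
    have hA := h.A_pos hL k
    have hα := h.α_succ_pos k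
    have hxt := h.xt_mem hL hQ (k + 1)
    rw [h.A_succ, h.ψ_succ]
    calc (A k + α (k + 1)) * f (x (k + 1))
        ≤ (A k + α (k + 1)) * quadraticModel f g L (xt (k + 1)) (x (k + 1)) := by
          gcongr
          exact horacle.upper _ hxt _ (h.x_mem hL hQ (k + 1))
      _ = A k * quadraticModel f g 0 (xt (k + 1)) (x k) +
            α (k + 1) * quadraticModel f g 0 (xt (k + 1)) (z (k + 1)) +
            (1 + m * A k) / 2 * ‖z (k + 1) - z k‖ ^ 2 :=
          mul_quadraticModel_similar_triangles (add_pos hA hα).ne' (h.α_succ_eq k)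
            (h.A_succ k ▸ h.xt_succ k) (h.A_succ k ▸ h.x_succ k)
      _ ≤ A k * f (x k) + α (k + 1) * quadraticModel f g m (xt (k + 1)) (z (k + 1)) +
            (1 + m * A k) / 2 * ‖z (k + 1) - z k‖ ^ 2 := by
          gcongr
          exacts [horacle.linearization_le hm hxt (h.x_mem hL hQ k), quadraticModel_mono hm _ _]
      _ ≤ ψ k (z (k + 1)) + α (k + 1) * quadraticModel f g m (xt (k + 1)) (z (k + 1)) := by
          linarith [h.ψ_z_add_le_ψ hL hQ k (h.z_mem (k + 1))]

theorem A_mul_sub_add_norm_sq_le (h : IsSTMRun f g Q L m α A xt x z ψ) (hL : 0 < L) (hm : 0 ≤ m)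
    (hQ : Convex ℝ Q) (horacle : IsFirstOrderOracle f g Q m L) (k : ℕ) {y : E} (hy : y ∈ Q) :
    A k * (f (x k) - f y) + (1 + m * A k) / 2 * ‖y - z k‖ ^ 2 ≤ 1 / 2 * ‖y - xt 0‖ ^ 2 := by
  linarith [h.A_mul_f_x_le hL hm hQ horacle k, h.ψ_z_add_le_ψ hL hQ k hy,
    h.ψ_le hL hQ horacle k hy]

theorem norm_z_sub_le (h : IsSTMRun f g Q L m α A xt x z ψ) (hL : 0 < L) (hm : 0 ≤ m)
    (hQ : Convex ℝ Q) (horacle : IsFirstOrderOracle f g Q m L) {xstar : E}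
    (hxstarQ : xstar ∈ Q) (hxstar : IsMinOn f Q xstar) (k : ℕ) :
    ‖z k - xstar‖ ≤ ‖xt 0 - xstar‖ := by
  have hA := (h.A_pos hL k).le
  have hestimate := h.A_mul_sub_add_norm_sq_le hL hm hQ horacle k hxstarQ
  have hgap : 0 ≤ A k * (f (x k) - f xstar) :=
    mul_nonneg hA (sub_nonneg.2 (isMinOn_iff.1 hxstar _ (h.x_mem hL hQ k)))
  have hcurv : 0 ≤ m * A k * ‖xstar - z k‖ ^ 2 := by positivity
  rw [norm_sub_rev (z k), norm_sub_rev (xt 0)]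
  refine le_of_sq_le_sq ?_ (norm_nonneg _)
  linarith

end IsSTMRun

end SimilarTriangles

theorem stmt_10_general {f : E → ℝ} {g : E → E} {Q : Set E} {L m R : ℝ} {α A : ℕ → ℝ}
    {xt x z : ℕ → E} {ψ : ℕ → E → ℝ} {xstar : E} (hL : 0 < L) (hm : 0 ≤ m) (hQ : Convex ℝ Q)
    (horacle : IsFirstOrderOracle f g Q m L) (hrun : IsSTMRun f g Q L m α A xt x z ψ)
    (hxstarQ : xstar ∈ Q) (hxstar : IsMinOn f Q xstar) (hR : ‖xt 0 - xstar‖ ≤ R) (k : ℕ) :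
    ‖z k - xstar‖ ≤ R ∧ ‖x k - xstar‖ ≤ R ∧ ‖xt k - xstar‖ ≤ R := by
  have hz (j : ℕ) : ‖z j - xstar‖ ≤ R :=
    (hrun.norm_z_sub_le hL hm hQ horacle hxstarQ hxstar j).trans hR
  simp only [← mem_closedBall_iff_norm] at hR hz ⊢
  exact ⟨hz k, hrun.x_mem_and_xt_mem_of_convex hL (convex_closedBall xstar R) hR hz k⟩

end InnerProductSpace

/-- Proposition 4.6: with exact gradients (`δ = 0`, `g̃ = ∇f`) the STM trajectory
stays in the ball of radius `R` around the solution `x*`. -/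
theorem stmt_10 {n : ℕ} (Q : Set (EuclideanSpace ℝ (Fin n)))
    (hQclosed : IsClosed Q) (hQconvex : Convex ℝ Q)
    (f : EuclideanSpace ℝ (Fin n) → ℝ)
    (f' : EuclideanSpace ℝ (Fin n) → EuclideanSpace ℝ (Fin n))
    (Lf μ μτ R : ℝ) (hLf : 0 < Lf) (hμ : 0 ≤ μ)
    (hμτ : μτ = μ ∨ μτ = μ / 2)
    (hgrad : ∀ v ∈ Q, HasGradientAt f (f' v) v)
    (hsmooth : ∀ v ∈ Q, ∀ w ∈ Q, ‖f' v - f' w‖ ≤ Lf * ‖v - w‖)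
    (hsc : ∀ v ∈ Q, ∀ w ∈ Q,
      f v + ⟪f' v, w - v⟫ + μ / 2 * ‖v - w‖ ^ 2 ≤ f w)
    (xstar : EuclideanSpace ℝ (Fin n)) (hxstarQ : xstar ∈ Q)
    (hxstar : ∀ y ∈ Q, f xstar ≤ f y)
    (α A : ℕ → ℝ) (xt x z : ℕ → EuclideanSpace ℝ (Fin n))
    (ψ : ℕ → EuclideanSpace ℝ (Fin n) → ℝ)
    (hxt0 : xt 0 ∈ Q) (hR : ‖xt 0 - xstar‖ ≤ R)
    (hα0 : α 0 = 1 / (2 * Lf)) (hA0 : A 0 = 1 / (2 * Lf))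
    (hψ0 : ∀ y, ψ 0 y = 1 / 2 * ‖y - xt 0‖ ^ 2 +
      α 0 * (f (xt 0) + ⟪f' (xt 0), y - xt 0⟫ + μτ / 2 * ‖y - xt 0‖ ^ 2))
    (hzmem : ∀ k, z k ∈ Q) (hzmin : ∀ k, ∀ y ∈ Q, ψ k (z k) ≤ ψ k y)
    (hx0 : x 0 = z 0)
    (hαpos : ∀ k, 0 < α (k + 1))
    (hαeq : ∀ k, (1 + μτ * A k) * (A k + α (k + 1)) = 2 * Lf * α (k + 1) ^ 2)
    (hA : ∀ k, A (k + 1) = A k + α (k + 1))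
    (hxt : ∀ k, xt (k + 1) = (A (k + 1))⁻¹ • (A k • x k + α (k + 1) • z k))
    (hψ : ∀ k y, ψ (k + 1) y = ψ k y + α (k + 1) *
      (f (xt (k + 1)) + ⟪f' (xt (k + 1)), y - xt (k + 1)⟫ +
        μτ / 2 * ‖y - xt (k + 1)‖ ^ 2))
    (hx : ∀ k, x (k + 1) = (A (k + 1))⁻¹ • (A k • x k + α (k + 1) • z (k + 1))) :
    ∀ k : ℕ, ‖z k - xstar‖ ≤ R ∧ ‖x k - xstar‖ ≤ R ∧ ‖xt k - xstar‖ ≤ R := by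
  obtain ⟨hμτ_nonneg, hμτ_le⟩ : 0 ≤ μτ ∧ μτ ≤ μ := by
    rcases hμτ with rfl | rfl <;> constructor <;> linarith
  have hlower : ∀ v ∈ Q, ∀ w ∈ Q, quadraticModel f f' μ v w ≤ f w := fun v hv w hw => by
    simpa only [quadraticModel, norm_sub_rev w v] using hsc v hv w hw
  have horacle : IsFirstOrderOracle f f' Q μτ (2 * Lf) :=
    (isFirstOrderOracle_of_lipschitz hμ hlower hsmooth).of_curvature_le hμτ_le
  exact stmt_10_general (mul_pos two_pos hLf) hμτ_nonneg hQconvex horacle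
    ⟨hxt0, hα0, hA0, hψ0, hzmem, fun k => isMinOn_iff.2 (hzmin k), hx0, hαpos, hαeq, hA, hxt, hψ,
      hx⟩ hxstarQ (isMinOn_iff.2 hxstar) hR
end

section
/- In the composite setting, for every k ≥ 0 the modified estimating functions satisfy ψ_{k+1}(z_{k+1}) ≥ ψ_k(z_k) + ((1 + μ_τ A_k)/2)‖z_k − z_{k+1}‖₂² + α_{k+1}(𝓛(x̃_{k+1}) + ⟨g̃(x̃_{k+1}), z_{k+1} − x̃_{k+1}⟩ + (μ_τ/2)‖z_{k+1} − x̃_{k+1}‖₂² + r(z_{k+1})). -/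
open scoped RealInnerProductSpace

/-! Each model added to `ψ k` is `μτ`-strongly convex and the proximal term `‖· - xt 0‖ ^ 2 / 2` is
`1`-strongly convex, so `ψ k` is strongly convex with parameter
`1 + μτ * (α 0 + ⋯ + α k) = 1 + μτ * A k`. Hence `ψ k` grows at least quadratically away from its
minimizer `z k`, and evaluating this growth at `z (k + 1)` gives the inequality. -/

section NormedSpace

variable {E : Type*} [NormedAddCommGroup E] [NormedSpace ℝ E] {s : Set E}

theorem uniformConvexOn_add_le_of_isMinOn {ω : ℝ → ℝ} {f : E → ℝ} {z y : E}
    (hf : UniformConvexOn s ω f) (hmin : IsMinOn f s z) (hz : z ∈ s) (hy : y ∈ s) :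
    f z + ω ‖z - y‖ ≤ f y := by
  -- Compare `z` with `(1 - t) • z + t • y`, divide by `t`, and let `t → 0`.
  have growth_of_mem_Ioo : ∀ t ∈ Set.Ioo (0 : ℝ) 1, f z + (1 - t) * ω ‖z - y‖ ≤ f y := by
    rintro t ⟨ht0, ht1⟩
    have ht : 0 ≤ 1 - t := sub_nonneg.2 ht1.le
    have hmin_le : f z ≤ f ((1 - t) • z + t • y) :=
      hmin (hf.1 hz hy ht ht0.le (sub_add_cancel 1 t))
    have hconv := hf.2 hz hy ht ht0.le (sub_add_cancel 1 t)
    simp only [smul_eq_mul] at hconv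
    refine le_of_mul_le_mul_left ?_ ht0
    linarith
  have hlim : Filter.Tendsto (fun t : ℝ => f z + (1 - t) * ω ‖z - y‖)
      (nhdsWithin 0 (Set.Ioi 0)) (nhds (f z + ω ‖z - y‖)) :=
    tendsto_nhdsWithin_of_tendsto_nhds (Continuous.tendsto' (by fun_prop) _ _ (by simp))
  refine le_of_tendsto hlim ?_
  filter_upwards [Ioo_mem_nhdsGT zero_lt_one] with t ht using growth_of_mem_Ioo t ht

theorem strongConvexOn_add_s17 {m n : ℝ} {f g : E → ℝ} (hf : StrongConvexOn s m f)
    (hg : StrongConvexOn s n g) : StrongConvexOn s (m + n) fun y => f y + g y :=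
  (UniformConvexOn.add hf hg).mono fun t => by
    simp only [Pi.add_apply]
    linarith

theorem strongConvexOn_const_mul {m c : ℝ} {f : E → ℝ} (hc : 0 ≤ c)
    (hf : StrongConvexOn s m f) : StrongConvexOn s (m * c) fun y => c * f y := by
  refine ⟨hf.1, fun x hx y hy a b ha hb hab => ?_⟩
  have hconv := mul_le_mul_of_nonneg_left (hf.2 hx hy ha hb hab) hc
  simp only [smul_eq_mul] at hconv ⊢
  linarith

section EstimatingFunctions

variable {σ μ : ℝ} {d : E → ℝ} {φ ψ : ℕ → E → ℝ} {α A : ℕ → ℝ}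

theorem strongConvexOn_estimating_functions
    (hd : StrongConvexOn s σ d) (hφ : ∀ k, StrongConvexOn s μ (φ k))
    (hα : ∀ k, 0 ≤ α k) (hA0 : A 0 = α 0) (hA : ∀ k, A (k + 1) = A k + α (k + 1))
    (hψ0 : ∀ y, ψ 0 y = d y + α 0 * φ 0 y)
    (hψ : ∀ k y, ψ (k + 1) y = ψ k y + α (k + 1) * φ (k + 1) y) (k : ℕ) :
    StrongConvexOn s (σ + μ * A k) (ψ k) := by
  induction k with
  | zero =>
    rw [funext hψ0, hA0]
    exact strongConvexOn_add_s17 hd (strongConvexOn_const_mul (hα 0) (hφ 0))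
  | succ k ih =>
    rw [funext (hψ k), hA, mul_add, ← add_assoc]
    exact strongConvexOn_add_s17 ih (strongConvexOn_const_mul (hα (k + 1)) (hφ (k + 1)))

theorem estimating_functions_succ_lower_bound
    (hd : StrongConvexOn s σ d) (hφ : ∀ k, StrongConvexOn s μ (φ k))
    (hα : ∀ k, 0 ≤ α k) (hA0 : A 0 = α 0) (hA : ∀ k, A (k + 1) = A k + α (k + 1))
    (hψ0 : ∀ y, ψ 0 y = d y + α 0 * φ 0 y)
    (hψ : ∀ k y, ψ (k + 1) y = ψ k y + α (k + 1) * φ (k + 1) y)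
    {k : ℕ} {z y : E} (hmin : IsMinOn (ψ k) s z) (hz : z ∈ s) (hy : y ∈ s) :
    ψ k z + (σ + μ * A k) / 2 * ‖z - y‖ ^ 2 + α (k + 1) * φ (k + 1) y ≤ ψ (k + 1) y := by
  have hψk : StrongConvexOn s (σ + μ * A k) (ψ k) :=
    strongConvexOn_estimating_functions hd hφ hα hA0 hA hψ0 hψ k
  rw [hψ]
  gcongr
  exact uniformConvexOn_add_le_of_isMinOn hψk hmin hz hy

end EstimatingFunctions

end NormedSpace

section InnerProductSpace

variable {E : Type*} [NormedAddCommGroup E] [InnerProductSpace ℝ E] {s : Set E}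

theorem convexOn_inner_sub (hs : Convex ℝ s) (g p : E) :
    ConvexOn ℝ s fun y => ⟪g, y - p⟫ := by
  have inner_sub_eq (y : E) : ⟪g, y - p⟫ = ⟪g, y⟫ + -⟪g, p⟫ := by
    rw [inner_sub_right, sub_eq_add_neg]
  simp only [inner_sub_eq]
  exact ((innerₛₗ ℝ g).convexOn hs).add_const _

theorem strongConvexOn_sq_norm_sub (hs : Convex ℝ s) (m : ℝ) (p : E) :
    StrongConvexOn s m fun y => m / 2 * ‖y - p‖ ^ 2 := by
  have sub_sq_norm_eq (y : E) : m / 2 * ‖y - p‖ ^ 2 - m / 2 * ‖y‖ ^ 2 =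
      ⟪-m • p, y⟫ + m / 2 * ‖p‖ ^ 2 := by
    rw [norm_sub_sq_real, real_inner_smul_left, real_inner_comm]
    ring
  rw [strongConvexOn_iff_convex]
  simp only [sub_sq_norm_eq]
  exact ((innerₛₗ ℝ (-m • p)).convexOn hs).add_const _

/-- The model at `p` of a composite objective `f + r`, used to build the estimating functions:
`f` is replaced by the quadratic with value `c`, (inexact) gradient `g` and curvature `μ` at `p`,
while `r` is kept exactly. -/
noncomputable def compositeModel (r : E → ℝ) (μ c : ℝ) (g p y : E) : ℝ :=
  c + ⟪g, y - p⟫ + μ / 2 * ‖y - p‖ ^ 2 + r y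

theorem strongConvexOn_compositeModel {r : E → ℝ} (hr : ConvexOn ℝ s r) (μ c : ℝ) (g p : E) :
    StrongConvexOn s μ (compositeModel r μ c g p) := by
  have hlinear : StrongConvexOn s 0 fun y => c + ⟪g, y - p⟫ :=
    strongConvexOn_zero.2 ((convexOn_const c hr.1).add (convexOn_inner_sub hr.1 g p))
  have hmodel := strongConvexOn_add_s17
    (strongConvexOn_add_s17 hlinear (strongConvexOn_sq_norm_sub hr.1 μ p)) (strongConvexOn_zero.2 hr)
  rwa [zero_add, add_zero] at hmodel

theorem stmt_17_general {Q : Set E} {r : E → ℝ} (hr : ConvexOn ℝ Q r) {μ : ℝ}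
    {c α A : ℕ → ℝ} {g p : ℕ → E} {x₀ : E} {ψ : ℕ → E → ℝ}
    (hα : ∀ k, 0 ≤ α k) (hA0 : A 0 = α 0) (hA : ∀ k, A (k + 1) = A k + α (k + 1))
    (hψ0 : ∀ y, ψ 0 y =
      1 / 2 * ‖y - x₀‖ ^ 2 + α 0 * compositeModel r μ (c 0) (g 0) (p 0) y)
    (hψ : ∀ k y, ψ (k + 1) y =
      ψ k y + α (k + 1) * compositeModel r μ (c (k + 1)) (g (k + 1)) (p (k + 1)) y)
    {k : ℕ} {z y : E} (hmin : IsMinOn (ψ k) Q z) (hz : z ∈ Q) (hy : y ∈ Q) :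
    ψ k z + (1 + μ * A k) / 2 * ‖z - y‖ ^ 2 +
        α (k + 1) * compositeModel r μ (c (k + 1)) (g (k + 1)) (p (k + 1)) y ≤
      ψ (k + 1) y :=
  estimating_functions_succ_lower_bound
    (φ := fun k => compositeModel r μ (c k) (g k) (p k)) (strongConvexOn_sq_norm_sub hr.1 1 x₀)
    (fun k => strongConvexOn_compositeModel hr μ (c k) (g k) (p k)) hα hA0 hA hψ0 hψ hmin hz hy

end InnerProductSpace

/-- Lemma 6.4: key inequality for the modified estimating functions in the
composite setting. -/
theorem stmt_17 {n : ℕ} (Q : Set (EuclideanSpace ℝ (Fin n)))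
    (hQclosed : IsClosed Q) (hQconvex : Convex ℝ Q)
    (Lc r : EuclideanSpace ℝ (Fin n) → ℝ)
    (hr : ConvexOn ℝ Set.univ r)
    (gt : EuclideanSpace ℝ (Fin n) → EuclideanSpace ℝ (Fin n))
    (μτ L : ℝ) (hμτ : 0 ≤ μτ) (hL : 0 < L)
    (α A : ℕ → ℝ) (xt x z : ℕ → EuclideanSpace ℝ (Fin n))
    (ψ : ℕ → EuclideanSpace ℝ (Fin n) → ℝ)
    (hxt0 : xt 0 ∈ Q) (hα0 : α 0 = 1 / L) (hA0 : A 0 = 1 / L)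
    (hψ0 : ∀ y, ψ 0 y = 1 / 2 * ‖y - xt 0‖ ^ 2 +
      α 0 * (Lc (xt 0) + ⟪gt (xt 0), y - xt 0⟫ + μτ / 2 * ‖y - xt 0‖ ^ 2 + r y))
    (hzmem : ∀ k, z k ∈ Q) (hzmin : ∀ k, ∀ y ∈ Q, ψ k (z k) ≤ ψ k y)
    (hx0 : x 0 = z 0)
    (hαpos : ∀ k, 0 < α (k + 1))
    (hαeq : ∀ k, (1 + μτ * A k) * (A k + α (k + 1)) = L * α (k + 1) ^ 2)
    (hA : ∀ k, A (k + 1) = A k + α (k + 1))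
    (hxt : ∀ k, xt (k + 1) = (A (k + 1))⁻¹ • (A k • x k + α (k + 1) • z k))
    (hψ : ∀ k y, ψ (k + 1) y = ψ k y + α (k + 1) *
      (Lc (xt (k + 1)) + ⟪gt (xt (k + 1)), y - xt (k + 1)⟫ +
        μτ / 2 * ‖y - xt (k + 1)‖ ^ 2 + r y))
    (hx : ∀ k, x (k + 1) = (A (k + 1))⁻¹ • (A k • x k + α (k + 1) • z (k + 1))) :
    ∀ k : ℕ,
      ψ k (z k) + (1 + μτ * A k) / 2 * ‖z k - z (k + 1)‖ ^ 2 +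
        α (k + 1) * (Lc (xt (k + 1)) + ⟪gt (xt (k + 1)), z (k + 1) - xt (k + 1)⟫ +
          μτ / 2 * ‖z (k + 1) - xt (k + 1)‖ ^ 2 + r (z (k + 1))) ≤
        ψ (k + 1) (z (k + 1)) := by
  have hα : ∀ k, 0 ≤ α k
    | 0 => hα0 ▸ (one_div_pos.2 hL).le
    | k + 1 => (hαpos k).le
  exact fun k => stmt_17_general (c := fun k => Lc (xt k)) (g := fun k => gt (xt k)) (p := xt)
    (hr.subset (Set.subset_univ Q) hQconvex) hα (hA0.trans hα0.symm) hA hψ0 hψ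
    (isMinOn_iff.2 (hzmin k)) (hzmem k) (hzmem (k + 1))
end
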